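/- arXiv:2009.06809 — 3 statements merged into one kernel-verified Lean document; each statement's English description precedes it below -/
import Mathlib

section
/- Let C ⊆ ℝ^n be a nonempty convex set and let C' be a nonempty proper face of C (C' ≠ C). Then there exists a maximal proper face C'' ∈ F*(C) with C' ⊆ C''. -/
/-!
A face of `C` that contains a relative interior point `x` of `C` is all of `C`: each segment from
`y ∈ C` to `x` can be prolonged inside `C` beyond `x`, which forces `y` into the face
(`eq_of_mem_intrinsicInterior`). In finite dimension a nonempty convex set has such a point `x`,
so the proper faces are exactly the faces that avoid `x`. That condition, like being a face,
survives unions of nonempty chains (`isFaceOf_sUnion`), and Zorn's lemma yields a maximal proper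
face above any given one.
-/

open MeasureTheory ProbabilityTheory Set Filter Topology
open scoped RealInnerProductSpace ENNReal ProbabilityTheory

noncomputable section

/-- The topological support of a measure on `ℝ^d`: the smallest closed set of full measure,
equivalently the set of points all of whose neighbourhoods have positive measure. -/
def msupp {d : ℕ} (μ : Measure (EuclideanSpace ℝ (Fin d))) : Set (EuclideanSpace ℝ (Fin d)) :=
  {x | ∀ U : Set (EuclideanSpace ℝ (Fin d)), IsOpen U → x ∈ U → 0 < μ U}

/-- The convex support `C_X` of a random vector with law `μ`. -/
def convSupp {d : ℕ} (μ : Measure (EuclideanSpace ℝ (Fin d))) : Set (EuclideanSpace ℝ (Fin d)) :=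
  convexHull ℝ (msupp μ)

/-- The logarithmic Laplace transform `K_X(u) = log E[exp(u·X)]`, with values in `(-∞, +∞]`. -/
def logLaplace {d : ℕ} (μ : Measure (EuclideanSpace ℝ (Fin d)))
    (u : EuclideanSpace ℝ (Fin d)) : EReal :=
  (∫⁻ x, ENNReal.ofReal (Real.exp ⟪u, x⟫) ∂μ).log

/-- The rate function `I_X(v) = sup_u (u·v - K_X(u))`. -/
def rateFn {d : ℕ} (μ : Measure (EuclideanSpace ℝ (Fin d)))
    (v : EuclideanSpace ℝ (Fin d)) : EReal :=
  ⨆ u : EuclideanSpace ℝ (Fin d), ((⟪u, v⟫ : ℝ) : EReal) - logLaplace μ u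

/-- The effective domain of an extended-real-valued function. -/
def edom {α : Type*} (f : α → EReal) : Set α := {x | f x < ⊤}

/-- The affine hyperplane with unit normal `ℓ` and offset `c`. -/
def hyp {d : ℕ} (ℓ : EuclideanSpace ℝ (Fin d)) (c : ℝ) : Set (EuclideanSpace ℝ (Fin d)) :=
  {v | ⟪ℓ, v⟫ = c}

/-- The hyperplane `{v : ℓ·v = c}` supports the convex set `C`: it meets `C` and `C` lies in
one of the two closed half-spaces bounded by it. -/
def SupportsSet {d : ℕ} (ℓ : EuclideanSpace ℝ (Fin d)) (c : ℝ)
    (C : Set (EuclideanSpace ℝ (Fin d))) : Prop :=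
  (hyp ℓ c ∩ C).Nonempty ∧ ((∀ x ∈ C, ⟪ℓ, x⟫ ≤ c) ∨ (∀ x ∈ C, c ≤ ⟪ℓ, x⟫))

/-- Orthogonal projection onto the hyperplane `{v : ℓ·v = c}` (for `‖ℓ‖ = 1`). -/
def projHyp {d : ℕ} (ℓ : EuclideanSpace ℝ (Fin d)) (c : ℝ)
    (v : EuclideanSpace ℝ (Fin d)) : EuclideanSpace ℝ (Fin d) :=
  v + (c - ⟪ℓ, v⟫) • ℓ

/-- A face of a convex set: a convex subset `F ⊆ C` such that any closed segment of `C` having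
a relative interior point in `F` has both endpoints in `F`. -/
def IsFaceOf {V : Type*} [AddCommGroup V] [Module ℝ V] (C F : Set V) : Prop :=
  Convex ℝ F ∧ IsExtreme ℝ C F

/-- A maximal proper face of a convex set: a nonempty proper face contained in no face
other than `C` and itself. -/
def IsMaxProperFace {V : Type*} [AddCommGroup V] [Module ℝ V] (C F : Set V) : Prop :=
  IsFaceOf C F ∧ F.Nonempty ∧ F ≠ C ∧
    ∀ F', IsFaceOf C F' → F'.Nonempty → F ⊆ F' → F' = C ∨ F' = F

/-- `F*₊(C_X)`: the maximal proper faces of the convex support carrying positive probability. -/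
def facesPlus {d : ℕ} (μ : Measure (EuclideanSpace ℝ (Fin d))) :
    Set (Set (EuclideanSpace ℝ (Fin d))) :=
  {C | IsMaxProperFace (convSupp μ) C ∧ 0 < μ C}

/-- `K_X` is steep: `|∇K_X(u_n)| → ∞` along every sequence in the interior of `D(K_X)`
converging to a boundary point of `D(K_X)`. -/
def Steep {d : ℕ} (μ : Measure (EuclideanSpace ℝ (Fin d))) : Prop :=
  ∀ (u : ℕ → EuclideanSpace ℝ (Fin d)) (u₀ : EuclideanSpace ℝ (Fin d)),
    (∀ n, u n ∈ interior (edom (logLaplace μ))) → Tendsto u atTop (𝓝 u₀) →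
    u₀ ∈ frontier (edom (logLaplace μ)) →
    Tendsto (fun n => ‖gradient (fun w => (logLaplace μ w).toReal) (u n)‖) atTop atTop

/-- Condition (a) of the projection property: for every hyperplane `L` supporting `C_X` with
`0 < P(X ∈ L) < 1`, the projections on `L` of the relative interiors of `D(K_X)` and
`D(K_{X|L})` coincide. -/
def CondA {d : ℕ} (μ : Measure (EuclideanSpace ℝ (Fin d))) : Prop :=
  ∀ (ℓ : EuclideanSpace ℝ (Fin d)) (c : ℝ), ‖ℓ‖ = 1 → SupportsSet ℓ c (convSupp μ) →
    0 < μ (hyp ℓ c) → μ (hyp ℓ c) < 1 →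
    projHyp ℓ c '' intrinsicInterior ℝ (edom (logLaplace μ)) =
      projHyp ℓ c '' intrinsicInterior ℝ (edom (logLaplace (μ[|hyp ℓ c])))

/-- Depth-`n` truncation of the (well-founded) recursive definition of the projection property. -/
def ProjPropN {d : ℕ} : ℕ → Measure (EuclideanSpace ℝ (Fin d)) → Prop
  | 0, μ => CondA μ
  | n + 1, μ => CondA μ ∧ ∀ C ∈ facesPlus μ, ProjPropN n (μ[|C])

/-- `K_X` has the projection property: condition (a) holds, and `K_{X|C}` has the projection
property for every `C ∈ F*₊(C_X)`. (The recursion on the dimension of `C_X` terminates in at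
most `d` steps, so this is equivalent to all finite-depth truncations holding.) -/
def ProjProp {d : ℕ} (μ : Measure (EuclideanSpace ℝ (Fin d))) : Prop :=
  ∀ n, ProjPropN n μ

/-- Depth-`n` truncation of the recursive definition of total steepness. -/
def TotallySteepN {d : ℕ} : ℕ → Measure (EuclideanSpace ℝ (Fin d)) → Prop
  | 0, μ => Steep μ
  | n + 1, μ => Steep μ ∧ ∀ C ∈ facesPlus μ, TotallySteepN n (μ[|C])

/-- `K_X` is totally steep: `K_X` is steep and `K_{X|C}` is totally steep for every
`C ∈ F*₊(C_X)`. -/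
def TotallySteep {d : ℕ} (μ : Measure (EuclideanSpace ℝ (Fin d))) : Prop :=
  ∀ n, TotallySteepN n μ

/-- `f` is strictly convex on `A`: `f` is affine on no nondegenerate segment contained in `A`. -/
def StrictlyConvexOnSet {d : ℕ} (f : EuclideanSpace ℝ (Fin d) → EReal)
    (A : Set (EuclideanSpace ℝ (Fin d))) : Prop :=
  ∀ x y : EuclideanSpace ℝ (Fin d), segment ℝ x y ⊆ A → x ≠ y →
    ¬ ∀ t : ℝ, t ∈ Icc (0 : ℝ) 1 →
      f ((1 - t) • x + t • y) = ((1 - t : ℝ) : EReal) * f x + ((t : ℝ) : EReal) * f y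

/-- From any point of `C`, the segment to a relative interior point can be prolonged within `C`. -/
lemma exists_mem_openSegment_of_mem_intrinsicInterior {V : Type*} [NormedAddCommGroup V]
    [NormedSpace ℝ V] {C : Set V} {x y : V} (hx : x ∈ intrinsicInterior ℝ C) (hy : y ∈ C) :
    ∃ z ∈ C, x ∈ openSegment ℝ y z := by
  obtain ⟨x', hx', rfl⟩ := mem_intrinsicInterior.1 hx
  let y' : affineSpan ℝ C := ⟨y, subset_affineSpan ℝ C hy⟩
  have hpar : ∀ t : ℝ, AffineMap.lineMap y (x' : V) t ∈ affineSpan ℝ C := fun t =>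
    AffineMap.lineMap_mem t y'.2 x'.2
  let f : ℝ → affineSpan ℝ C := fun t => ⟨AffineMap.lineMap y (x' : V) t, hpar t⟩
  have hf : Continuous f := AffineMap.lineMap_continuous.subtype_mk _
  have hf1 : f 1 = x' := Subtype.ext (AffineMap.lineMap_apply_one _ _)
  have hev : ∀ᶠ t in 𝓝 (1 : ℝ), f t ∈ ((↑) ⁻¹' C : Set (affineSpan ℝ C)) := by
    refine hf.continuousAt.eventually (p := fun w => w ∈ ((↑) ⁻¹' C : Set (affineSpan ℝ C))) ?_
    rw [hf1]
    exact mem_interior_iff_mem_nhds.1 hx'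
  obtain ⟨t, htC, ht⟩ := ((hev.filter_mono nhdsWithin_le_nhds).and
    (self_mem_nhdsWithin : Ioi (1 : ℝ) ∈ 𝓝[>] 1)).exists
  have ht1 : 1 < t := ht
  have ht0 : t ≠ 0 := by positivity
  -- `z = y + t (x - y)` with `t > 1`, so `x = (1 - t⁻¹) y + t⁻¹ z`.
  refine ⟨_, htC, 1 - t⁻¹, t⁻¹, by linarith [inv_lt_one_of_one_lt₀ ht1], by positivity, by ring, ?_⟩
  simp only [f, AffineMap.lineMap_apply_module, smul_add, smul_smul]
  rw [inv_mul_cancel₀ ht0, mul_sub, inv_mul_cancel₀ ht0]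
  module

lemma eq_of_mem_intrinsicInterior {V : Type*} [NormedAddCommGroup V] [NormedSpace ℝ V]
    {C F : Set V} (hF : IsFaceOf C F) {x : V} (hx : x ∈ intrinsicInterior ℝ C) (hxF : x ∈ F) :
    F = C := by
  refine hF.2.subset.antisymm fun y hy => ?_
  obtain ⟨z, hz, hxz⟩ := exists_mem_openSegment_of_mem_intrinsicInterior hx hy
  exact hF.2.left_mem_of_mem_openSegment hy hz hxF hxz

lemma isFaceOf_sUnion {V : Type*} [AddCommGroup V] [Module ℝ V] {C : Set V} {c : Set (Set V)}
    (hc : ∀ F ∈ c, IsFaceOf C F) (hchain : IsChain (· ⊆ ·) c) : IsFaceOf C (⋃₀ c) := by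
  refine ⟨hchain.directedOn.convex_sUnion fun F hF => (hc F hF).1, sUnion_subset fun F hF =>
    (hc F hF).2.subset, ?_⟩
  rintro a ha b hb z ⟨F, hFc, hzF⟩ hz
  exact ⟨F, hFc, (hc F hFc).2.left_mem_of_mem_openSegment ha hb hzF hz⟩

/-- Every nonempty proper face of a nonempty convex set `C ⊆ ℝ^n` is contained in a maximal
proper face of `C`. -/
theorem exists_maxProperFace_superset {n : ℕ} (C C' : Set (EuclideanSpace ℝ (Fin n)))
    (hne : C.Nonempty) (hconv : Convex ℝ C)
    (hface : IsFaceOf C C') (hne' : C'.Nonempty) (hproper : C' ≠ C) :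
    ∃ C'', IsMaxProperFace C C'' ∧ C' ⊆ C'' := by
  obtain ⟨x, hx⟩ := hne.intrinsicInterior hconv
  have havoid : ∀ F, IsFaceOf C F → F ≠ C → x ∉ F := fun F hF hFC hxF =>
    hFC (eq_of_mem_intrinsicInterior hF hx hxF)
  obtain ⟨M, hCM, ⟨hMface, hxM⟩, hMmax⟩ := zorn_subset_nonempty {F | IsFaceOf C F ∧ x ∉ F}
    (fun c hc hchain _ => ⟨⋃₀ c, ⟨isFaceOf_sUnion (fun F hF => (hc hF).1) hchain,
      fun ⟨F, hF, hxF⟩ => (hc hF).2 hxF⟩, fun F hF => subset_sUnion_of_mem hF⟩)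
    C' ⟨hface, havoid C' hface hproper⟩
  refine ⟨M, ⟨hMface, hne'.mono hCM, ?_, fun F' hF' _ hMF' => ?_⟩, hCM⟩
  · rintro rfl
    exact hxM (intrinsicInterior_subset hx)
  · by_cases h : F' = C
    · exact Or.inl h
    · exact Or.inr ((hMmax ⟨hF', havoid F' hF' h⟩ hMF').antisymm hMF')

end
end

section
/- Let X be a random vector in ℝ^d, d ≥ 1, and let L be an affine hyperplane supporting C_X with P(X ∈ L) > 0. Define K̃(u) = K_{X|L}(u) for u ∈ pr_L^{-1}(pr_L(D(K_X))) and K̃(u) = +∞ otherwise, and let K̃* denote its convex conjugate, K̃*(v) = sup_{u∈ℝ^d}(u·v − K̃(u)). Then: (i) I_X(v) = K̃*(v) − log P(X ∈ L) for every v ∈ L; (ii) K̃*(v) = +∞ for every v ∉ L; and (iii) pr_L(rint D(K̃)) = pr_L(rint D(K_X)). -/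
/-!
Write `D = D(K_X)`, `p = P(X ∈ L)` and `F(u) = ∫_L exp(u·x) dμ(x)`, so that
`K_{X|L} = log F - log p`. Moving `u` along the unit normal `ℓ` multiplies `F` by `exp(s c)`, hence
`K̃` is finite exactly on the cylinder `D + ℝℓ = pr_L⁻¹(pr_L(D))`.

(i) Since `F ≤ E[exp(u·X)]`, one has `K_X ≥ K̃ + log p`, which gives `I_X ≤ K̃* - log p`.
Conversely `X` lies almost surely on one side of `L`, so for `u ∈ D` dominated convergence gives
`exp(-t c) E[exp((u + t ℓ)·X)] → F(u)` as `t` tends to `+∞` or `-∞` (according to the side), see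
`tendsto_lap`; for `v ∈ L` the terms of `I_X(v)` at `u + t ℓ` then converge to `u·v - log F(u)`.

(ii) `K̃(t ℓ) = t c`, so `K̃*(v) ≥ t (ℓ·v - c)` for every real `t`.

(iii) `D` is convex, and for a convex set in finite dimension the relative interior of the cylinder
`D + ℝℓ` projects onto the same set as that of `D`: `intrinsicInterior_subset_cyl` and
`exists_mem_intrinsicInterior_of_cyl`, both from prolonging segments beyond relative interior
points.
-/

open MeasureTheory ProbabilityTheory Set Filter Topology
open scoped RealInnerProductSpace ENNReal ProbabilityTheory

noncomputable section

open scoped Classical in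
/-- The modified Laplace transform `K̃_{X|L}`: equal to `K_{X|L}` on `pr_L⁻¹(pr_L(D(K_X)))`
and `+∞` elsewhere. -/
def tildeK {d : ℕ} (μ : Measure (EuclideanSpace ℝ (Fin d)))
    (ℓ : EuclideanSpace ℝ (Fin d)) (c : ℝ) (u : EuclideanSpace ℝ (Fin d)) : EReal :=
  if u ∈ projHyp ℓ c ⁻¹' (projHyp ℓ c '' edom (logLaplace μ))
    then logLaplace (μ[|hyp ℓ c]) u else ⊤

/-! ### Relative interiors of convex sets -/

/-- A segment ending at a relative interior point can be prolonged within the set. -/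
lemma exists_prolong {V : Type*} [NormedAddCommGroup V] [NormedSpace ℝ V] {C : Set V} {x y : V}
    (hx : x ∈ intrinsicInterior ℝ C) (hy : y ∈ C) : ∃ ε : ℝ, 0 < ε ∧ x + ε • (x - y) ∈ C := by
  obtain ⟨x', hx', rfl⟩ := mem_intrinsicInterior.1 hx
  let y' : affineSpan ℝ C := ⟨y, subset_affineSpan ℝ C hy⟩
  let g : ℝ → affineSpan ℝ C := fun t =>
    ⟨AffineMap.lineMap (x' : V) y (-t), AffineMap.lineMap_mem _ x'.2 y'.2⟩
  have hg : Continuous g := by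
    refine Continuous.subtype_mk ?_ _
    exact AffineMap.lineMap_continuous.comp continuous_neg
  have hg0 : g 0 = x' := by ext; simp [g]
  have hnhds : ∀ᶠ t in 𝓝 (0 : ℝ), g t ∈ ((↑) ⁻¹' C : Set (affineSpan ℝ C)) := by
    apply hg.continuousAt
    rw [hg0]
    exact mem_interior_iff_mem_nhds.1 hx'
  obtain ⟨ε, hε, h⟩ := Metric.eventually_nhds_iff.1 hnhds
  refine ⟨ε / 2, by positivity, ?_⟩
  have h1 : g (ε / 2) ∈ ((↑) ⁻¹' C : Set (affineSpan ℝ C)) := by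
    apply h
    rw [Real.dist_eq, sub_zero, abs_of_pos (by positivity)]
    linarith
  have h2 : ((g (ε / 2) : affineSpan ℝ C) : V) = x' + (ε / 2) • ((x' : V) - y) := by
    simp only [g, AffineMap.lineMap_apply_module']
    module
  rw [← h2]
  exact h1

/-- The half-open segment from a point of a convex set to a relative interior point consists of
relative interior points: a homothety centred at the first point is an open map of the affine
span, and it maps the set into itself. -/
lemma segment_mem_intrinsicInterior {V : Type*} [NormedAddCommGroup V] [NormedSpace ℝ V]
    {C : Set V} (hC : Convex ℝ C) {w z : V} (hw : w ∈ C) (hz : z ∈ intrinsicInterior ℝ C)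
    {t : ℝ} (ht0 : 0 < t) (ht1 : t ≤ 1) : w + t • (z - w) ∈ intrinsicInterior ℝ C := by
  obtain ⟨z', hz', rfl⟩ := mem_intrinsicInterior.1 hz
  have : Nonempty (affineSpan ℝ C) := ⟨z'⟩
  let w' : affineSpan ℝ C := ⟨w, subset_affineSpan ℝ C hw⟩
  let S : Set (affineSpan ℝ C) := (↑) ⁻¹' C
  have hval : ∀ a : affineSpan ℝ C,
      ((AffineMap.homothety w' t a : affineSpan ℝ C) : V) = w + t • ((a : V) - w) := by
    intro a
    simp [AffineMap.homothety_apply, w', add_comm]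
  have hmaps : AffineMap.homothety w' t '' S ⊆ S := by
    rintro _ ⟨a, ha, rfl⟩
    change ((AffineMap.homothety w' t a : affineSpan ℝ C) : V) ∈ C
    rw [hval]
    exact hC.add_smul_sub_mem hw ha ⟨ht0.le, ht1⟩
  have hopen := AffineMap.homothety_isOpenMap w' t ht0.ne'
  refine mem_intrinsicInterior.2 ⟨AffineMap.homothety w' t z', ?_, hval z'⟩
  exact interior_mono hmaps (hopen.image_interior_subset S (mem_image_of_mem _ hz'))

/-- The cylinder over `D` in the direction `ℓ`. -/
def cyl {V : Type*} [AddCommGroup V] [Module ℝ V] (ℓ : V) (D : Set V) : Set V :=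
  {u | ∃ s : ℝ, u + s • ℓ ∈ D}

lemma convex_cyl {V : Type*} [AddCommGroup V] [Module ℝ V] (ℓ : V) {D : Set V}
    (hD : Convex ℝ D) : Convex ℝ (cyl ℓ D) := by
  rintro x ⟨s, hs⟩ y ⟨r, hr⟩ a b ha hb hab
  refine ⟨a * s + b * r, ?_⟩
  convert hD hs hr ha hb hab using 1
  module

lemma intrinsicInterior_subset_cyl {V : Type*} [NormedAddCommGroup V] [NormedSpace ℝ V]
    [FiniteDimensional ℝ V] (ℓ : V) {D : Set V} (hD : Convex ℝ D) :
    intrinsicInterior ℝ D ⊆ intrinsicInterior ℝ (cyl ℓ D) := by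
  intro x hx
  have hE := convex_cyl ℓ hD
  have hne : (cyl ℓ D).Nonempty := ⟨x, 0, by simpa using intrinsicInterior_subset hx⟩
  obtain ⟨z, hz⟩ := hne.intrinsicInterior hE
  obtain ⟨s, hs⟩ := intrinsicInterior_subset hz
  obtain ⟨ε, hε, hw⟩ := exists_prolong hx hs
  have hwE : x + ε • (x - z) ∈ cyl ℓ D := by
    refine ⟨-(ε * s), ?_⟩
    convert hw using 1
    module
  have := segment_mem_intrinsicInterior hE hwE hz (t := ε / (1 + ε)) (by positivity)
    (by rw [div_le_one (by positivity)]; linarith)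
  convert this using 1
  match_scalars <;> field_simp <;> ring

lemma exists_mem_intrinsicInterior_of_cyl {V : Type*} [NormedAddCommGroup V] [NormedSpace ℝ V]
    [FiniteDimensional ℝ V] (ℓ : V) {D : Set V} (hD : Convex ℝ D) {x : V}
    (hx : x ∈ intrinsicInterior ℝ (cyl ℓ D)) : ∃ s : ℝ, x + s • ℓ ∈ intrinsicInterior ℝ D := by
  obtain ⟨s₀, hs₀⟩ := intrinsicInterior_subset hx
  obtain ⟨z, hz⟩ := Set.Nonempty.intrinsicInterior hD ⟨_, hs₀⟩
  have hzE : z ∈ cyl ℓ D := ⟨0, by simpa using intrinsicInterior_subset hz⟩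
  obtain ⟨ε, hε, s, hs⟩ := exists_prolong hx hzE
  refine ⟨s / (1 + ε), ?_⟩
  have := segment_mem_intrinsicInterior hD hs hz (t := ε / (1 + ε)) (by positivity)
    (by rw [div_le_one (by positivity)]; linarith)
  convert this using 1
  match_scalars <;> field_simp <;> ring

/-! ### Orthogonal projection onto the hyperplane -/

lemma projHyp_add_smul {d : ℕ} {ℓ : EuclideanSpace ℝ (Fin d)} (c : ℝ) (hℓ : ‖ℓ‖ = 1)
    (u : EuclideanSpace ℝ (Fin d)) (s : ℝ) : projHyp ℓ c (u + s • ℓ) = projHyp ℓ c u := by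
  simp only [projHyp, inner_add_right, inner_smul_right, real_inner_self_eq_norm_sq, hℓ]
  module

lemma projHyp_preimage_image {d : ℕ} {ℓ : EuclideanSpace ℝ (Fin d)} (c : ℝ) (hℓ : ‖ℓ‖ = 1)
    (D : Set (EuclideanSpace ℝ (Fin d))) :
    projHyp ℓ c ⁻¹' (projHyp ℓ c '' D) = cyl ℓ D := by
  ext u
  constructor
  · rintro ⟨w, hw, h⟩
    refine ⟨⟪ℓ, w⟫ - ⟪ℓ, u⟫, ?_⟩
    convert hw using 1
    simp only [projHyp] at h
    linear_combination (norm := module) (-1 : ℝ) • h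
  · rintro ⟨s, hs⟩
    exact ⟨_, hs, projHyp_add_smul c hℓ u s⟩

/-! ### Laplace transforms -/

/-- The Laplace transform `∫ exp(u·x) dμ(x)` with values in `[0, ∞]`, so that `logLaplace` is
its logarithm. It is also used for the (unnormalised) restriction of the law to a hyperplane. -/
def lap {d : ℕ} (μ : Measure (EuclideanSpace ℝ (Fin d))) (u : EuclideanSpace ℝ (Fin d)) : ℝ≥0∞ :=
  ∫⁻ x, ENNReal.ofReal (Real.exp ⟪u, x⟫) ∂μ

lemma logLaplace_eq {d : ℕ} (μ : Measure (EuclideanSpace ℝ (Fin d)))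
    (u : EuclideanSpace ℝ (Fin d)) : logLaplace μ u = (lap μ u).log := rfl

lemma mem_edom_logLaplace {d : ℕ} {μ : Measure (EuclideanSpace ℝ (Fin d))}
    {u : EuclideanSpace ℝ (Fin d)} : u ∈ edom (logLaplace μ) ↔ lap μ u < ⊤ := by
  simp [edom, logLaplace_eq]

lemma convex_edom_logLaplace {d : ℕ} (μ : Measure (EuclideanSpace ℝ (Fin d))) :
    Convex ℝ (edom (logLaplace μ)) := by
  intro u hu w hw a b ha hb hab
  rw [mem_edom_logLaplace] at *
  have hle : lap μ (a • u + b • w) ≤ ENNReal.ofReal a * lap μ u + ENNReal.ofReal b * lap μ w := by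
    unfold lap
    rw [← lintegral_const_mul _ (by fun_prop), ← lintegral_const_mul _ (by fun_prop),
      ← lintegral_add_left (by fun_prop)]
    refine lintegral_mono fun x => ?_
    rw [← ENNReal.ofReal_mul ha, ← ENNReal.ofReal_mul hb,
      ← ENNReal.ofReal_add (by positivity) (by positivity)]
    refine ENNReal.ofReal_le_ofReal ?_
    have := convexOn_exp.2 (mem_univ ⟪u, x⟫) (mem_univ ⟪w, x⟫) ha hb hab
    simpa [inner_add_left, inner_smul_left] using this
  exact hle.trans_lt (ENNReal.add_lt_top.2
    ⟨ENNReal.mul_lt_top ENNReal.ofReal_lt_top hu, ENNReal.mul_lt_top ENNReal.ofReal_lt_top hw⟩)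

lemma measurableSet_hyp {d : ℕ} (ℓ : EuclideanSpace ℝ (Fin d)) (c : ℝ) :
    MeasurableSet (hyp ℓ c) :=
  (isClosed_eq (by fun_prop) continuous_const : IsClosed {v | ⟪ℓ, v⟫ = c}).measurableSet

/-- On the hyperplane, translating `u` along the normal only contributes a constant factor. -/
lemma lap_restrict_add_smul {d : ℕ} (μ : Measure (EuclideanSpace ℝ (Fin d)))
    (ℓ : EuclideanSpace ℝ (Fin d)) (c : ℝ) (u : EuclideanSpace ℝ (Fin d)) (s : ℝ) :
    lap (μ.restrict (hyp ℓ c)) (u + s • ℓ)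
      = ENNReal.ofReal (Real.exp (s * c)) * lap (μ.restrict (hyp ℓ c)) u := by
  unfold lap
  rw [← lintegral_const_mul _ (by fun_prop)]
  refine setLIntegral_congr_fun (measurableSet_hyp ℓ c) fun x hx => ?_
  have hx' : ⟪ℓ, x⟫ = c := hx
  rw [← ENNReal.ofReal_mul (by positivity), ← Real.exp_add, inner_add_left, inner_smul_left, hx']
  simp [add_comm]

lemma lap_pos {d : ℕ} {μ : Measure (EuclideanSpace ℝ (Fin d))} (hμ : μ ≠ 0)
    (u : EuclideanSpace ℝ (Fin d)) : 0 < lap μ u := by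
  rw [pos_iff_ne_zero]
  intro h
  rw [lap, lintegral_eq_zero_iff (by fun_prop)] at h
  apply hμ
  rw [← ae_eq_bot, ← eventually_false_iff_eq_bot]
  filter_upwards [h] with x hx
  simp only [Pi.zero_apply, ENNReal.ofReal_eq_zero] at hx
  exact absurd hx (not_le.2 (Real.exp_pos _))

lemma logLaplace_cond {d : ℕ} (μ : Measure (EuclideanSpace ℝ (Fin d)))
    (s : Set (EuclideanSpace ℝ (Fin d))) (u : EuclideanSpace ℝ (Fin d)) :
    logLaplace (μ[|s]) u = -(μ s).log + (lap (μ.restrict s) u).log := by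
  rw [logLaplace, ProbabilityTheory.cond, lintegral_smul_measure, smul_eq_mul,
    ENNReal.log_mul_add, ENNReal.log_inv]
  rfl

lemma exists_log_eq {x : ℝ≥0∞} (h0 : 0 < x) (h1 : x < ⊤) : ∃ r : ℝ, x.log = r :=
  ⟨_, ENNReal.log_pos_real h0.ne' h1.ne⟩

/-- The law is carried by the closed half-space containing its convex support. The sign `σ` is
the direction in which the tilt `t ↦ u + t σ ℓ` concentrates the law on the hyperplane. -/
lemma exists_sign_ae {d : ℕ} {μ : Measure (EuclideanSpace ℝ (Fin d))}
    {ℓ : EuclideanSpace ℝ (Fin d)} {c : ℝ} (hsupp : SupportsSet ℓ c (convSupp μ)) :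
    ∃ σ : ℝ, σ ≠ 0 ∧ ∀ᵐ x ∂μ, σ * (⟪ℓ, x⟫ - c) ≤ 0 := by
  have hae : ∀ᵐ x ∂μ, x ∈ convSupp μ := by
    filter_upwards [Measure.support_mem_ae (μ := μ)] with x hx
    refine subset_convexHull ℝ _ fun U hU hxU => ?_
    exact (Measure.mem_support_iff_forall x).1 hx U (hU.mem_nhds hxU)
  rcases hsupp.2 with h | h
  · refine ⟨1, one_ne_zero, ?_⟩
    filter_upwards [hae] with x hx
    linarith [h x hx]
  · refine ⟨-1, by norm_num, ?_⟩
    filter_upwards [hae] with x hx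
    linarith [h x hx]

/-- Tilting along the normal: after removing the factor `exp(n σ c)`, the transform at
`u + n σ ℓ` converges to the transform of the part of the law on the hyperplane. -/
lemma tendsto_lap {d : ℕ} {μ : Measure (EuclideanSpace ℝ (Fin d))}
    {ℓ : EuclideanSpace ℝ (Fin d)} {c σ : ℝ} (hσ : σ ≠ 0)
    (hae : ∀ᵐ x ∂μ, σ * (⟪ℓ, x⟫ - c) ≤ 0) {u : EuclideanSpace ℝ (Fin d)} (hu : lap μ u < ⊤) :
    Tendsto (fun n : ℕ => ENNReal.ofReal (Real.exp (-(n * σ * c))) * lap μ (u + (n * σ) • ℓ)) atTop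
      (𝓝 (lap (μ.restrict (hyp ℓ c)) u)) := by
  have hlim : lap (μ.restrict (hyp ℓ c)) u = ∫⁻ x, (hyp ℓ c).indicator
      (fun x => ENNReal.ofReal (Real.exp ⟪u, x⟫)) x ∂μ :=
    (lintegral_indicator (measurableSet_hyp ℓ c) _).symm
  have heq : ∀ n : ℕ, ENNReal.ofReal (Real.exp (-(n * σ * c))) * lap μ (u + (n * σ) • ℓ)
      = ∫⁻ x, ENNReal.ofReal (Real.exp (⟪u, x⟫ + n * (σ * (⟪ℓ, x⟫ - c)))) ∂μ := by
    intro n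
    unfold lap
    rw [← lintegral_const_mul _ (by fun_prop)]
    refine lintegral_congr fun x => ?_
    rw [← ENNReal.ofReal_mul (by positivity), ← Real.exp_add, inner_add_left, inner_smul_left]
    congr 2
    simp only [conj_trivial]
    ring
  simp_rw [heq, hlim]
  refine tendsto_lintegral_of_dominated_convergence
    (fun x => ENNReal.ofReal (Real.exp ⟪u, x⟫)) (fun n => by fun_prop) ?_ hu.ne ?_
  · intro n
    filter_upwards [hae] with x hx
    refine ENNReal.ofReal_le_ofReal (Real.exp_le_exp.2 ?_)
    have := mul_nonpos_of_nonneg_of_nonpos (Nat.cast_nonneg (α := ℝ) n) hx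
    linarith
  · filter_upwards [hae] with x hx
    by_cases hxL : x ∈ hyp ℓ c
    · have hx' : ⟪ℓ, x⟫ = c := hxL
      simp [hxL, hx']
    · have hx' : ⟪ℓ, x⟫ - c ≠ 0 := fun h => hxL (sub_eq_zero.1 h)
      have hneg : σ * (⟪ℓ, x⟫ - c) < 0 := lt_of_le_of_ne hx (mul_ne_zero hσ hx')
      rw [indicator_of_notMem hxL, ← ENNReal.ofReal_zero]
      refine ENNReal.tendsto_ofReal (Real.tendsto_exp_atBot.comp ?_)
      exact tendsto_atBot_add_const_left _ _
        (tendsto_natCast_atTop_atTop.atTop_mul_const_of_neg hneg)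

/-! ### The modified transform and its conjugate -/

lemma lap_restrict_lt_top {d : ℕ} {μ : Measure (EuclideanSpace ℝ (Fin d))}
    {ℓ : EuclideanSpace ℝ (Fin d)} {c : ℝ} {u : EuclideanSpace ℝ (Fin d)}
    (hu : u ∈ cyl ℓ (edom (logLaplace μ))) : lap (μ.restrict (hyp ℓ c)) u < ⊤ := by
  obtain ⟨s, hs⟩ := hu
  rw [mem_edom_logLaplace] at hs
  have h1 : lap (μ.restrict (hyp ℓ c)) (u + s • ℓ) < ⊤ :=
    (lintegral_mono' Measure.restrict_le_self le_rfl).trans_lt hs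
  rw [lap_restrict_add_smul] at h1
  by_contra h
  rw [not_lt_top_iff.1 h, ENNReal.mul_top (by simp [Real.exp_pos])] at h1
  exact lt_irrefl _ h1

lemma tildeK_of_mem {d : ℕ} {μ : Measure (EuclideanSpace ℝ (Fin d))}
    {ℓ : EuclideanSpace ℝ (Fin d)} {c : ℝ} (hℓ : ‖ℓ‖ = 1) {u : EuclideanSpace ℝ (Fin d)}
    (hu : u ∈ cyl ℓ (edom (logLaplace μ))) :
    tildeK μ ℓ c u = -(μ (hyp ℓ c)).log + (lap (μ.restrict (hyp ℓ c)) u).log := by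
  rw [tildeK, projHyp_preimage_image c hℓ, if_pos hu, logLaplace_cond]

lemma tildeK_of_notMem {d : ℕ} {μ : Measure (EuclideanSpace ℝ (Fin d))}
    {ℓ : EuclideanSpace ℝ (Fin d)} {c : ℝ} (hℓ : ‖ℓ‖ = 1) {u : EuclideanSpace ℝ (Fin d)}
    (hu : u ∉ cyl ℓ (edom (logLaplace μ))) : tildeK μ ℓ c u = ⊤ := by
  rw [tildeK, projHyp_preimage_image c hℓ, if_neg hu]

/-- Where `K̃` is finite it is determined by a real number `f = log ∫_L exp(u·x) dμ(x)`. -/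
lemma exists_tildeK_eq {d : ℕ} {μ : Measure (EuclideanSpace ℝ (Fin d))}
    {ℓ : EuclideanSpace ℝ (Fin d)} {c : ℝ} (hℓ : ‖ℓ‖ = 1) (h0 : 0 < μ (hyp ℓ c))
    {p : ℝ} (hp : (μ (hyp ℓ c)).log = p) {u : EuclideanSpace ℝ (Fin d)}
    (hu : u ∈ cyl ℓ (edom (logLaplace μ))) :
    ∃ f : ℝ, (lap (μ.restrict (hyp ℓ c)) u).log = f ∧ tildeK μ ℓ c u = ((f - p : ℝ) : EReal) := by
  have hne : μ.restrict (hyp ℓ c) ≠ 0 := by simpa using h0.ne'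
  obtain ⟨f, hf⟩ := exists_log_eq (lap_pos hne u) (lap_restrict_lt_top hu)
  refine ⟨f, hf, ?_⟩
  rw [tildeK_of_mem hℓ hu, hp, hf, sub_eq_add_neg, add_comm]
  norm_cast

lemma edom_tildeK {d : ℕ} {μ : Measure (EuclideanSpace ℝ (Fin d))}
    {ℓ : EuclideanSpace ℝ (Fin d)} {c : ℝ} (hℓ : ‖ℓ‖ = 1) (h0 : 0 < μ (hyp ℓ c))
    {p : ℝ} (hp : (μ (hyp ℓ c)).log = p) :
    edom (tildeK μ ℓ c) = cyl ℓ (edom (logLaplace μ)) := by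
  ext u
  by_cases hu : u ∈ cyl ℓ (edom (logLaplace μ))
  · obtain ⟨f, -, hf⟩ := exists_tildeK_eq hℓ h0 hp hu
    simp only [hu, iff_true]
    change tildeK μ ℓ c u < ⊤
    rw [hf]
    exact EReal.coe_lt_top _
  · simp only [hu, iff_false]
    change ¬ tildeK μ ℓ c u < ⊤
    rw [tildeK_of_notMem hℓ hu]
    exact lt_irrefl _

/-- Letting the tilt go to infinity in the definition of `I_X(v)`, for `v ∈ L`. -/
lemma sub_log_lap_restrict_le_rateFn {d : ℕ} {μ : Measure (EuclideanSpace ℝ (Fin d))}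
    {ℓ : EuclideanSpace ℝ (Fin d)} {c : ℝ} (hsupp : SupportsSet ℓ c (convSupp μ))
    {u v : EuclideanSpace ℝ (Fin d)} (hu : lap μ u < ⊤) (hv : v ∈ hyp ℓ c) :
    ((⟪u, v⟫ : ℝ) : EReal) - (lap (μ.restrict (hyp ℓ c)) u).log ≤ rateFn μ v := by
  obtain ⟨σ, hσ, hae⟩ := exists_sign_ae hsupp
  have hlog := (ENNReal.continuous_log.tendsto _).comp (tendsto_lap hσ hae hu)
  have hcont : Continuous fun y : EReal => ((⟪u, v⟫ : ℝ) : EReal) - y := by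
    refine continuous_iff_continuousAt.2 fun y => ?_
    have h := EReal.continuousAt_add (p := (((⟪u, v⟫ : ℝ) : EReal), -y))
      (Or.inl (EReal.coe_ne_top _)) (Or.inl (EReal.coe_ne_bot _))
    exact ContinuousAt.comp (f := fun y : EReal => (((⟪u, v⟫ : ℝ) : EReal), -y)) h (by fun_prop)
  refine le_of_tendsto ((hcont.tendsto _).comp hlog) (Eventually.of_forall fun n => ?_)
  have hv' : ⟪ℓ, v⟫ = c := hv
  refine le_trans (le_of_eq ?_) (le_iSup _ (u + (n * σ) • ℓ))
  simp only [Function.comp_apply, ENNReal.log_mul_add, logLaplace_eq,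
    ENNReal.log_ofReal_of_pos (Real.exp_pos _), Real.log_exp, inner_add_left, inner_smul_left, hv',
    conj_trivial]
  generalize (lap μ (u + (n * σ) • ℓ)).log = y
  generalize (n * σ * c : ℝ) = r
  induction y with
  | bot => rw [EReal.add_bot, EReal.coe_sub_bot, EReal.coe_sub_bot]
  | top => rw [EReal.coe_add_top, EReal.sub_top, EReal.sub_top]
  | coe y => norm_cast; ring

/-- **Lemma 4.** For a hyperplane `L` supporting `C_X` with `P(X ∈ L) > 0`:
(i) `I_X = (K̃_{X|L})* - log P(X ∈ L)` on `L`; (ii) `(K̃_{X|L})* = +∞` off `L`;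
(iii) `pr_L(rint D(K̃_{X|L})) = pr_L(rint D(K_X))`. -/
theorem tildeK_conjugate {d : ℕ} (hd : 1 ≤ d)
    (μ : Measure (EuclideanSpace ℝ (Fin d))) [IsProbabilityMeasure μ]
    (ℓ : EuclideanSpace ℝ (Fin d)) (c : ℝ) (hℓ : ‖ℓ‖ = 1)
    (hsupp : SupportsSet ℓ c (convSupp μ)) (h0 : 0 < μ (hyp ℓ c)) :
    (∀ v ∈ hyp ℓ c,
      rateFn μ v =
        (⨆ u : EuclideanSpace ℝ (Fin d), ((⟪u, v⟫ : ℝ) : EReal) - tildeK μ ℓ c u)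
          - (μ (hyp ℓ c)).log) ∧
    (∀ v, v ∉ hyp ℓ c →
      (⨆ u : EuclideanSpace ℝ (Fin d), ((⟪u, v⟫ : ℝ) : EReal) - tildeK μ ℓ c u) = ⊤) ∧
    projHyp ℓ c '' intrinsicInterior ℝ (edom (tildeK μ ℓ c)) =
      projHyp ℓ c '' intrinsicInterior ℝ (edom (logLaplace μ)) := by
  obtain ⟨p, hp⟩ := exists_log_eq h0 (measure_lt_top μ _)
  refine ⟨fun v hv => le_antisymm ?_ ?_, fun v hv => ?_, ?_⟩
  · refine iSup_le fun u => ?_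
    by_cases hu : u ∈ edom (logLaplace μ)
    · have huE : u ∈ cyl ℓ (edom (logLaplace μ)) := ⟨0, by simpa using hu⟩
      obtain ⟨f, hf, hK⟩ := exists_tildeK_eq hℓ h0 hp huE
      obtain ⟨m, hm⟩ := exists_log_eq (lap_pos (IsProbabilityMeasure.ne_zero μ) u)
        (mem_edom_logLaplace.1 hu)
      have hfm : f ≤ m := by
        rw [← EReal.coe_le_coe_iff, ← hf, ← hm]
        exact ENNReal.log_le_log (lintegral_mono' Measure.restrict_le_self le_rfl)
      calc ((⟪u, v⟫ : ℝ) : EReal) - logLaplace μ u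
          ≤ (((⟪u, v⟫ : ℝ) : EReal) - tildeK μ ℓ c u) - (μ (hyp ℓ c)).log := by
            rw [hK, hp, logLaplace_eq, hm]
            norm_cast
            linarith
        _ ≤ _ := EReal.sub_le_sub
            (le_iSup (fun u => ((⟪u, v⟫ : ℝ) : EReal) - tildeK μ ℓ c u) u) le_rfl
    · have : logLaplace μ u = ⊤ := not_lt_top_iff.1 hu
      simp [this]
  · rw [hp, EReal.sub_le_iff_le_add (Or.inl (EReal.coe_ne_bot _)) (Or.inl (EReal.coe_ne_top _))]
    refine iSup_le fun u => ?_
    by_cases huE : u ∈ cyl ℓ (edom (logLaplace μ))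
    · obtain ⟨f, hf, hK⟩ := exists_tildeK_eq hℓ h0 hp huE
      obtain ⟨s, hs⟩ := huE
      have key := sub_log_lap_restrict_le_rateFn hsupp (mem_edom_logLaplace.1 hs) hv
      have hv' : ⟪ℓ, v⟫ = c := hv
      rw [lap_restrict_add_smul, ENNReal.log_mul_add, hf,
        ENNReal.log_ofReal_of_pos (Real.exp_pos _), Real.log_exp, inner_add_left,
        inner_smul_left, hv'] at key
      rw [← EReal.sub_le_iff_le_add (Or.inl (EReal.coe_ne_bot _)) (Or.inl (EReal.coe_ne_top _)), hK]
      refine le_trans (le_of_eq ?_) key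
      norm_cast
      simp only [conj_trivial]
      ring
    · simp [tildeK_of_notMem hℓ huE]
  · have hv' : ⟪ℓ, v⟫ - c ≠ 0 := fun h => hv (sub_eq_zero.1 h)
    have h0D : (0 : EuclideanSpace ℝ (Fin d)) ∈ edom (logLaplace μ) := by
      simp [mem_edom_logLaplace, lap]
    have hmem : ∀ t : ℝ, t • ℓ ∈ cyl ℓ (edom (logLaplace μ)) := fun t => ⟨-t, by simpa using h0D⟩
    have hK : ∀ t : ℝ, tildeK μ ℓ c (t • ℓ) = ((t * c : ℝ) : EReal) := by
      intro t
      have h1 := lap_restrict_add_smul μ ℓ c 0 t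
      have h2 : lap (μ.restrict (hyp ℓ c)) 0 = μ (hyp ℓ c) := by simp [lap]
      rw [zero_add, h2] at h1
      rw [tildeK_of_mem hℓ (hmem t), h1, ENNReal.log_mul_add, hp,
        ENNReal.log_ofReal_of_pos (Real.exp_pos _), Real.log_exp]
      norm_cast
      ring
    rw [EReal.eq_top_iff_forall_lt]
    intro y
    -- At `u = t ℓ` the term of the supremum is `t (⟪ℓ, v⟫ - c)`; this `t` makes it `y + 1`.
    refine lt_of_lt_of_le ?_ (le_iSup _ (((y + 1) / (⟪ℓ, v⟫ - c)) • ℓ))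
    rw [hK, inner_smul_left]
    norm_cast
    simp only [conj_trivial]
    rw [← mul_sub, div_mul_cancel₀ _ hv']
    linarith
  · rw [edom_tildeK hℓ h0 hp]
    have hD := convex_edom_logLaplace μ
    apply Subset.antisymm
    · rintro _ ⟨x, hx, rfl⟩
      obtain ⟨s, hs⟩ := exists_mem_intrinsicInterior_of_cyl ℓ hD hx
      exact ⟨_, hs, projHyp_add_smul c hℓ x s⟩
    · exact image_mono (intrinsicInterior_subset_cyl ℓ hD)

end
end

section
/- Let X be a random vector in ℝ^d, d ≥ 1. If v_0 ∈ ℝ^d satisfies I_X(v_0) < +∞ and there exists u ∈ ℝ^d with I_X(v) ≥ I_X(v_0) + u·(v − v_0) for all v ∈ ℝ^d (i.e. I_X is subdifferentiable at v_0), then v_0 ∈ rint D(I_X). Equivalently, I_X is subdifferentiable at no point outside the relative interior of its effective domain. -/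
/-!
Write `L(w) = E[exp(w·X)]`. If `v₀ ∈ D(I_X)` were outside the relative interior of the convex set
`D(I_X)`, there would be `l` with `l·v ≤ c := l·v₀` on `D(I_X)`, strictly for some `v₁ ∈ D(I_X)`
(`exists_proper_support`).

Everything else rests on `exists_tilted_mean`: the mean `m` of the law tilted by `exp(u·x)` on a
bounded set `A` satisfies `I_X(m) ≤ u·m - log E[exp(u·X); A]`, by Jensen's inequality.

* With `u = 0` and `A ⊆ {l·x > c}`, such a mean would be a point of `D(I_X)` where `l > c`;
  hence `l·X ≤ c` almost surely (`ae_le_of_edom_le`).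
* With `u` a subgradient of `I_X` at `v₀` and `A` a large ball, the subgradient inequality at `m`
  gives `log L(u) ≤ u·v₀ - I_X(v₀)` (`laplace_le_of_subgradient`).

By definition of `I_X`, `log L(u + l) ≥ (u + l)·v₀ - I_X(v₀) ≥ log L(u) + c`. As `l·X ≤ c`, this
forces `l·X = c` almost surely. Then `I_X` is infinite off the hyperplane `l·v = c`
(`inner_eq_of_ae_eq`), which contradicts `l·v₁ < c`.
-/


open MeasureTheory ProbabilityTheory Set Filter Topology
open scoped RealInnerProductSpace ENNReal ProbabilityTheory

noncomputable section

/-! ### The rate function and bounded tilted means -/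

/-- Multiplicative form of a real upper bound on `I_X(v)`; it avoids `EReal` arithmetic. -/
lemma rateFn_le_iff {d : ℕ} (μ : Measure (EuclideanSpace ℝ (Fin d)))
    (v : EuclideanSpace ℝ (Fin d)) (M : ℝ) :
    rateFn μ v ≤ (M : EReal) ↔ ∀ w : EuclideanSpace ℝ (Fin d),
      ENNReal.ofReal (Real.exp (⟪w, v⟫ - M)) ≤
        ∫⁻ x, ENNReal.ofReal (Real.exp ⟪w, x⟫) ∂μ := by
  unfold rateFn
  rw [iSup_le_iff]
  refine forall_congr' fun w => ?_
  rw [EReal.sub_le_iff_le_add (Or.inr (EReal.coe_ne_top M)) (Or.inr (EReal.coe_ne_bot M)),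
    ← ENNReal.log_le_log_iff, ENNReal.log_ofReal_of_pos (Real.exp_pos _), Real.log_exp,
    EReal.coe_sub, EReal.sub_le_iff_le_add (Or.inl (EReal.coe_ne_bot M))
      (Or.inl (EReal.coe_ne_top M)), add_comm]
  rfl

lemma rateFn_nonneg {d : ℕ} (μ : Measure (EuclideanSpace ℝ (Fin d))) [IsProbabilityMeasure μ]
    (v : EuclideanSpace ℝ (Fin d)) : 0 ≤ rateFn μ v := by
  refine le_trans ?_ (le_iSup _ (0 : EuclideanSpace ℝ (Fin d)))
  simp [logLaplace]

lemma exists_real_of_mem_edom {d : ℕ} (μ : Measure (EuclideanSpace ℝ (Fin d)))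
    [IsProbabilityMeasure μ] (v : EuclideanSpace ℝ (Fin d)) (hv : v ∈ edom (rateFn μ)) :
    ∃ r : ℝ, rateFn μ v = (r : EReal) := by
  refine ⟨(rateFn μ v).toReal, (EReal.coe_toReal (ne_of_lt hv) ?_).symm⟩
  intro h
  have := rateFn_nonneg μ v
  rw [h] at this
  simp at this

lemma convex_edom_rateFn {d : ℕ} (μ : Measure (EuclideanSpace ℝ (Fin d)))
    [IsProbabilityMeasure μ] : Convex ℝ (edom (rateFn μ)) := by
  intro x hx y hy a b ha hb hab
  obtain ⟨r, hr⟩ := exists_real_of_mem_edom μ x hx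
  obtain ⟨s, hs⟩ := exists_real_of_mem_edom μ y hy
  have hr' := (rateFn_le_iff μ x r).1 hr.le
  have hs' := (rateFn_le_iff μ y s).1 hs.le
  refine lt_of_le_of_lt ((rateFn_le_iff μ _ (max r s)).2 fun w => ?_) (EReal.coe_lt_top (max r s))
  have hxy : ⟪w, a • x + b • y⟫ ≤ max ⟪w, x⟫ ⟪w, y⟫ := by
    rw [inner_add_right, real_inner_smul_right, real_inner_smul_right]
    calc a * ⟪w, x⟫ + b * ⟪w, y⟫
        ≤ a * max ⟪w, x⟫ ⟪w, y⟫ + b * max ⟪w, x⟫ ⟪w, y⟫ := by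
          gcongr
          · exact le_max_left _ _
          · exact le_max_right _ _
      _ = max ⟪w, x⟫ ⟪w, y⟫ := by rw [← add_mul, hab, one_mul]
  rcases max_choice ⟪w, x⟫ ⟪w, y⟫ with h | h
  · refine le_trans (ENNReal.ofReal_le_ofReal (Real.exp_le_exp.2 ?_)) (hr' w)
    have := le_max_left r s
    linarith
  · refine le_trans (ENNReal.ofReal_le_ofReal (Real.exp_le_exp.2 ?_)) (hs' w)
    have := le_max_right r s
    linarith

/-- The barycentre `m` of the law tilted by `exp(u·x)` and conditioned on a bounded set `A`
satisfies the easy half of the Donsker–Varadhan inequality,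
`I_X(m) ≤ u·m - log E[exp(u·X); A]`. It follows from the tangent line inequality
`exp y ≥ exp y₀ * (1 + (y - y₀))` at `y₀ = (w - u)·m`. The first equation says that `m` is the
barycentre, in weak form. -/
lemma exists_tilted_mean {d : ℕ} (μ : Measure (EuclideanSpace ℝ (Fin d)))
    [IsProbabilityMeasure μ] (u : EuclideanSpace ℝ (Fin d))
    {A : Set (EuclideanSpace ℝ (Fin d))} {R : ℝ}
    (hAR : A ⊆ Metric.closedBall 0 R) (hpos : μ A ≠ 0) :
    ∃ m : EuclideanSpace ℝ (Fin d),
      (∀ w, ∫ x in A, Real.exp ⟪u, x⟫ * ⟪w, x - m⟫ ∂μ = 0) ∧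
      0 < ∫ x in A, Real.exp ⟪u, x⟫ ∂μ ∧
      rateFn μ m ≤ ((⟪u, m⟫ - Real.log (∫ x in A, Real.exp ⟪u, x⟫ ∂μ) : ℝ) : EReal) := by
  have hint : ∀ {F : Type} [NormedAddCommGroup F] (f : EuclideanSpace ℝ (Fin d) → F),
      Continuous f → IntegrableOn f A μ := fun f hf =>
    (hf.continuousOn.integrableOn_compact (isCompact_closedBall 0 R)).mono_set hAR
  set Z := ∫ x in A, Real.exp ⟪u, x⟫ ∂μ with hZ
  have hZpos : 0 < Z := by
    rw [hZ, setIntegral_pos_iff_support_of_nonneg_ae]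
    · have : Function.support (fun x : EuclideanSpace ℝ (Fin d) => Real.exp ⟪u, x⟫) = univ := by
        ext x; simp [(Real.exp_pos _).ne']
      rw [this, univ_inter]
      exact pos_iff_ne_zero.2 hpos
    · exact Eventually.of_forall fun x => (Real.exp_pos _).le
    · exact hint _ (by fun_prop)
  set m := Z⁻¹ • ∫ x in A, Real.exp ⟪u, x⟫ • x ∂μ with hm
  have hmean : ∀ w, ∫ x in A, Real.exp ⟪u, x⟫ * ⟪w, x - m⟫ ∂μ = 0 := by
    intro w
    have h1 : ∫ x in A, Real.exp ⟪u, x⟫ * ⟪w, x⟫ ∂μ = Z * ⟪w, m⟫ := by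
      have := integral_inner (𝕜 := ℝ) (hint (fun x => Real.exp ⟪u, x⟫ • x) (by fun_prop)) w
      simp only [real_inner_smul_right] at this
      rw [this, hm, real_inner_smul_right, mul_inv_cancel_left₀ hZpos.ne']
    simp only [inner_sub_right, mul_sub]
    rw [integral_sub (hint _ (by fun_prop)) (hint _ (by fun_prop)), h1, integral_mul_const]
    exact sub_self _
  refine ⟨m, hmean, hZpos, (rateFn_le_iff μ _ _).2 fun w => ?_⟩
  have hlow : Real.exp ⟪w - u, m⟫ * Z ≤ ∫ x in A, Real.exp ⟪w, x⟫ ∂μ := by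
    calc Real.exp ⟪w - u, m⟫ * Z
        = ∫ x in A, Real.exp ⟪w - u, m⟫ *
            (Real.exp ⟪u, x⟫ + Real.exp ⟪u, x⟫ * ⟪w - u, x - m⟫) ∂μ := by
          rw [integral_const_mul, integral_add (hint _ (by fun_prop)) (hint _ (by fun_prop)),
            hmean, add_zero]
      _ ≤ ∫ x in A, Real.exp ⟪w, x⟫ ∂μ := by
          refine integral_mono (hint _ (by fun_prop)) (hint _ (by fun_prop)) fun x => ?_
          have h := Real.add_one_le_exp ⟪w - u, x - m⟫
          have e : Real.exp ⟪w, x⟫ =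
              Real.exp ⟪w - u, m⟫ * (Real.exp ⟪u, x⟫ * Real.exp ⟪w - u, x - m⟫) := by
            rw [← Real.exp_add, ← Real.exp_add]
            congr 1
            simp only [inner_sub_left, inner_sub_right]
            ring
          show _ ≤ Real.exp ⟪w, x⟫
          rw [e]
          refine mul_le_mul_of_nonneg_left ?_ (Real.exp_pos _).le
          nlinarith [Real.exp_pos ⟪u, x⟫]
  have e : Real.exp (⟪w, m⟫ - (⟪u, m⟫ - Real.log Z)) = Real.exp ⟪w - u, m⟫ * Z := by
    rw [inner_sub_left, ← sub_add, Real.exp_add, Real.exp_log hZpos]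
  rw [e]
  calc ENNReal.ofReal (Real.exp ⟪w - u, m⟫ * Z)
      ≤ ENNReal.ofReal (∫ x in A, Real.exp ⟪w, x⟫ ∂μ) := ENNReal.ofReal_le_ofReal hlow
    _ = ∫⁻ x in A, ENNReal.ofReal (Real.exp ⟪w, x⟫) ∂μ :=
        ofReal_integral_eq_lintegral_ofReal (hint _ (by fun_prop))
          (Eventually.of_forall fun x => (Real.exp_pos _).le)
    _ ≤ _ := setLIntegral_le_lintegral _ _

lemma lintegral_le_of_forall_closedBall {d : ℕ} (μ : Measure (EuclideanSpace ℝ (Fin d)))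
    (f : EuclideanSpace ℝ (Fin d) → ℝ≥0∞) (C : ℝ≥0∞)
    (h : ∀ n : ℕ, ∫⁻ x in Metric.closedBall 0 (n : ℝ), f x ∂μ ≤ C) : ∫⁻ x, f x ∂μ ≤ C := by
  have hU : (⋃ n : ℕ, Metric.closedBall (0 : EuclideanSpace ℝ (Fin d)) (n : ℝ)) = univ :=
    Metric.iUnion_closedBall_nat 0
  rw [← setLIntegral_univ, ← hU, setLIntegral_iUnion_of_directed]
  · exact iSup_le h
  · refine Monotone.directed_le (f := fun n : ℕ =>
      Metric.closedBall (0 : EuclideanSpace ℝ (Fin d)) (n : ℝ)) fun a b hab => ?_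
    exact Metric.closedBall_subset_closedBall (by exact_mod_cast hab)

/-- Half of `K_X = I_X*` at a subgradient: if `u` is a subgradient of `I_X` at `v₀`, then
`K_X(u) ≤ u·v₀ - I_X(v₀)`. Testing the subgradient inequality at the tilted means over growing
balls replaces the Fenchel–Moreau theorem. -/
lemma laplace_le_of_subgradient {d : ℕ} (μ : Measure (EuclideanSpace ℝ (Fin d)))
    [IsProbabilityMeasure μ] (v₀ u : EuclideanSpace ℝ (Fin d)) (r : ℝ)
    (hr : rateFn μ v₀ = (r : EReal))
    (hu : ∀ v, rateFn μ v₀ + ((⟪u, v - v₀⟫ : ℝ) : EReal) ≤ rateFn μ v) :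
    ∫⁻ x, ENNReal.ofReal (Real.exp ⟪u, x⟫) ∂μ ≤ ENNReal.ofReal (Real.exp (⟪u, v₀⟫ - r)) := by
  refine lintegral_le_of_forall_closedBall μ _ _ fun n => ?_
  by_cases hpos : μ (Metric.closedBall 0 (n : ℝ)) = 0
  · rw [setLIntegral_measure_zero _ _ hpos]
    exact zero_le
  obtain ⟨m, -, hZ, hm⟩ :=
    exists_tilted_mean μ u subset_rfl hpos
  have h := (hu m).trans hm
  rw [hr, ← EReal.coe_add, EReal.coe_le_coe_iff, inner_sub_right] at h
  rw [← ofReal_integral_eq_lintegral_ofReal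
    ((Continuous.continuousOn (by fun_prop)).integrableOn_compact (isCompact_closedBall _ _))
    (Eventually.of_forall fun x => (Real.exp_pos _).le)]
  refine ENNReal.ofReal_le_ofReal ?_
  rw [← Real.log_le_iff_le_exp hZ]
  linarith

/-- A closed half-space containing `D(I_X)` has full measure: otherwise the mean of `X` over a
bounded piece of its complement would be a point of `D(I_X)` outside it. -/
lemma ae_le_of_edom_le {d : ℕ} (μ : Measure (EuclideanSpace ℝ (Fin d)))
    [IsProbabilityMeasure μ] (l : EuclideanSpace ℝ (Fin d)) (c : ℝ)
    (h : ∀ v ∈ edom (rateFn μ), ⟪l, v⟫ ≤ c) : ∀ᵐ x ∂μ, ⟪l, x⟫ ≤ c := by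
  have hmeas : MeasurableSet {x : EuclideanSpace ℝ (Fin d) | c < ⟪l, x⟫} :=
    (isOpen_lt continuous_const (by fun_prop)).measurableSet
  have hnull : ∀ n : ℕ, μ ({x | c < ⟪l, x⟫} ∩ Metric.closedBall 0 (n : ℝ)) = 0 := by
    intro n
    by_contra hpos
    have hAm := hmeas.inter
      (measurableSet_closedBall : MeasurableSet (Metric.closedBall
        (0 : EuclideanSpace ℝ (Fin d)) (n : ℝ)))
    obtain ⟨m, hmean, -, hm⟩ := exists_tilted_mean μ 0 inter_subset_right hpos
    have hmc := h m (lt_of_le_of_lt hm (EReal.coe_lt_top _))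
    have h0 := hmean l
    simp only [inner_zero_left, Real.exp_zero, one_mul] at h0
    refine absurd h0 (ne_of_gt ?_)
    have hi : IntegrableOn (fun x => ⟪l, x - m⟫)
        ({x | c < ⟪l, x⟫} ∩ Metric.closedBall 0 (n : ℝ)) μ :=
      ((Continuous.continuousOn (by fun_prop)).integrableOn_compact
        (isCompact_closedBall 0 (n : ℝ))).mono_set inter_subset_right
    have hgt : ∀ x ∈ {x | c < ⟪l, x⟫} ∩ Metric.closedBall 0 (n : ℝ), 0 < ⟪l, x - m⟫ := by
      intro x hx
      have : c < ⟪l, x⟫ := hx.1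
      rw [inner_sub_right]
      linarith
    rw [setIntegral_pos_iff_support_of_nonneg_ae _ hi]
    · have hsupp : {x | c < ⟪l, x⟫} ∩ Metric.closedBall 0 (n : ℝ) ⊆
          Function.support fun x => ⟪l, x - m⟫ := fun x hx => (hgt x hx).ne'
      rw [inter_eq_right.2 hsupp]
      exact pos_iff_ne_zero.2 hpos
    · filter_upwards [ae_restrict_mem hAm] with x hx using (hgt x hx).le
  have : μ {x | c < ⟪l, x⟫} = 0 := by
    rw [← inter_univ {x | c < ⟪l, x⟫}, ← Metric.iUnion_closedBall_nat 0, inter_iUnion]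
    exact measure_iUnion_null hnull
  rw [ae_iff]
  simpa only [not_le] using this

/-! ### Proper supporting hyperplanes -/

/-- A point of a convex set outside its relative interior admits a supporting hyperplane which
does not contain the whole set. The point is separated from the interior inside the direction
space of the affine hull. -/
lemma exists_proper_support {d : ℕ} {S : Set (EuclideanSpace ℝ (Fin d))} (hS : Convex ℝ S)
    {v₀ : EuclideanSpace ℝ (Fin d)} (hv : v₀ ∈ S) (hnot : v₀ ∉ intrinsicInterior ℝ S) :
    ∃ l : EuclideanSpace ℝ (Fin d), (∀ v ∈ S, ⟪l, v⟫ ≤ ⟪l, v₀⟫) ∧ ∃ v ∈ S, ⟪l, v⟫ < ⟪l, v₀⟫ := by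
  have hv' : v₀ ∈ affineSpan ℝ S := subset_affineSpan ℝ S hv
  have : Nonempty (affineSpan ℝ S) := ⟨⟨v₀, hv'⟩⟩
  let φ : (affineSpan ℝ S).direction ≃ᵃⁱ[ℝ] affineSpan ℝ S :=
    AffineIsometryEquiv.vaddConst ℝ ⟨v₀, hv'⟩
  have hφ : ∀ w, (φ w : EuclideanSpace ℝ (Fin d)) = w + v₀ := fun w => rfl
  let T : Set (affineSpan ℝ S).direction := φ ⁻¹' ((↑) ⁻¹' S)
  have hT : Convex ℝ T := hS.affine_preimage
    ((affineSpan ℝ S).subtype.comp φ.toAffineEquiv.toAffineMap)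
  have hmemT : ∀ w : (affineSpan ℝ S).direction, w ∈ T ↔ (w : EuclideanSpace ℝ (Fin d)) + v₀ ∈ S :=
    fun w => Iff.rfl
  have hint : interior T = φ ⁻¹' interior ((↑) ⁻¹' S) :=
    (φ.toHomeomorph.preimage_interior _).symm
  have h0 : (0 : (affineSpan ℝ S).direction) ∉ interior T := by
    rw [hint]
    intro h
    exact hnot (mem_intrinsicInterior.2 ⟨φ 0, h, by simp [hφ]⟩)
  have hne : (interior T).Nonempty := by
    obtain ⟨y, hy⟩ := Set.Nonempty.intrinsicInterior hS ⟨v₀, hv⟩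
    obtain ⟨z, hz, -⟩ := mem_intrinsicInterior.1 hy
    refine ⟨φ.symm z, ?_⟩
    rw [hint]
    simpa using hz
  obtain ⟨f, hf⟩ := geometric_hahn_banach_open_point hT.interior isOpen_interior h0
  rw [map_zero] at hf
  have hfT : ∀ w ∈ T, f w ≤ 0 := by
    intro w hw
    have : w ∈ closure (interior T) := by
      rw [hT.closure_interior_eq_closure_of_nonempty_interior hne]
      exact subset_closure hw
    exact closure_minimal (fun a ha => (hf a ha).le)
      (isClosed_le f.continuous continuous_const) this
  let l := (InnerProductSpace.toDual ℝ (affineSpan ℝ S).direction).symm f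
  have hl : ∀ w : (affineSpan ℝ S).direction,
      ⟪(l : EuclideanSpace ℝ (Fin d)), (w : EuclideanSpace ℝ (Fin d))⟫ = f w := fun w =>
    (Submodule.coe_inner _ l w).symm.trans InnerProductSpace.toDual_symm_apply
  refine ⟨l, fun v hvS => ?_, ?_⟩
  · have hd : v - v₀ ∈ (affineSpan ℝ S).direction :=
      AffineSubspace.vsub_mem_direction (subset_affineSpan ℝ S hvS) hv'
    have h := hfT ⟨v - v₀, hd⟩ ((hmemT _).2 (by simpa using hvS))
    rw [← hl, inner_sub_right] at h
    linarith
  · obtain ⟨w, hw⟩ := hne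
    refine ⟨w + v₀, (hmemT w).1 (interior_subset hw), ?_⟩
    have h := hf w hw
    rw [← hl] at h
    rw [inner_add_right]
    linarith

/-! ### Hyperplanes of full measure and the conclusion -/

/-- If `l·X = c` almost surely then `K_X(t l) = t c`, so `I_X = +∞` off the hyperplane. -/
lemma inner_eq_of_ae_eq {d : ℕ} (μ : Measure (EuclideanSpace ℝ (Fin d)))
    [IsProbabilityMeasure μ] (l : EuclideanSpace ℝ (Fin d)) (c : ℝ)
    (h : ∀ᵐ x ∂μ, ⟪l, x⟫ = c) (v : EuclideanSpace ℝ (Fin d)) (hv : v ∈ edom (rateFn μ)) :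
    ⟪l, v⟫ = c := by
  obtain ⟨r, hr⟩ := exists_real_of_mem_edom μ v hv
  have hb : ∀ t : ℝ, t * (⟪l, v⟫ - c) ≤ r := by
    intro t
    have h1 := (rateFn_le_iff μ v r).1 hr.le (t • l)
    have h2 : ∫⁻ x, ENNReal.ofReal (Real.exp ⟪t • l, x⟫) ∂μ =
        ENNReal.ofReal (Real.exp (t * c)) := by
      rw [lintegral_congr_ae (g := fun _ => ENNReal.ofReal (Real.exp (t * c)))]
      · simp
      · filter_upwards [h] with x hx
        rw [real_inner_smul_left, hx]
    rw [h2, ENNReal.ofReal_le_ofReal_iff (Real.exp_pos _).le, Real.exp_le_exp,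
      real_inner_smul_left] at h1
    linarith
  by_contra hne
  have hne' : ⟪l, v⟫ - c ≠ 0 := sub_ne_zero.2 hne
  have := hb ((r + 1) / (⟪l, v⟫ - c))
  rw [div_mul_cancel₀ _ hne'] at this
  linarith

/-- If `I_X` is subdifferentiable at `v₀` (with `I_X(v₀) < ∞`), then
`v₀ ∈ rint D(I_X)`; i.e. `I_X` is subdifferentiable at no point outside the relative interior
of its effective domain. -/
theorem mem_rint_of_subdifferentiable {d : ℕ} (hd : 1 ≤ d)
    (μ : Measure (EuclideanSpace ℝ (Fin d))) [IsProbabilityMeasure μ]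
    (v₀ : EuclideanSpace ℝ (Fin d)) (hfin : rateFn μ v₀ < ⊤)
    (hsub : ∃ u : EuclideanSpace ℝ (Fin d),
      ∀ v, rateFn μ v₀ + ((⟪u, v - v₀⟫ : ℝ) : EReal) ≤ rateFn μ v) :
    v₀ ∈ intrinsicInterior ℝ (edom (rateFn μ)) := by
  obtain ⟨u, hu⟩ := hsub
  obtain ⟨r, hr⟩ := exists_real_of_mem_edom μ v₀ hfin
  by_contra hnot
  obtain ⟨l, hle, v₁, hv₁, hlt⟩ := exists_proper_support (convex_edom_rateFn μ) hfin hnot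
  have hae := ae_le_of_edom_le μ l ⟪l, v₀⟫ hle
  have hK := laplace_le_of_subgradient μ v₀ u r hr hu
  have hI := (rateFn_le_iff μ v₀ r).1 hr.le (u + l)
  -- Pointwise, `exp((u + l)·X) ≤ exp(l·v₀) exp(u·X)`, while `hK` and `hI` give the reverse
  -- inequality between the expectations; hence equality holds almost surely.
  have hmul : ∀ x : EuclideanSpace ℝ (Fin d),
      ENNReal.ofReal (Real.exp (⟪l, v₀⟫ + ⟪u, x⟫)) =
        ENNReal.ofReal (Real.exp ⟪l, v₀⟫) * ENNReal.ofReal (Real.exp ⟪u, x⟫) := by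
    intro x
    rw [Real.exp_add, ENNReal.ofReal_mul (Real.exp_pos _).le]
  have hG : ∫⁻ x, ENNReal.ofReal (Real.exp (⟪l, v₀⟫ + ⟪u, x⟫)) ∂μ ≤
      ENNReal.ofReal (Real.exp (⟪u + l, v₀⟫ - r)) := by
    simp only [hmul]
    rw [lintegral_const_mul' _ _ ENNReal.ofReal_ne_top]
    refine (mul_le_mul_right hK _).trans_eq ?_
    rw [← ENNReal.ofReal_mul (Real.exp_pos _).le, ← Real.exp_add, inner_add_left]
    congr 2
    ring
  have hFG : (fun x => ENNReal.ofReal (Real.exp ⟪u + l, x⟫)) ≤ᵐ[μ]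
      fun x => ENNReal.ofReal (Real.exp (⟪l, v₀⟫ + ⟪u, x⟫)) := by
    filter_upwards [hae] with x hx
    refine ENNReal.ofReal_le_ofReal (Real.exp_le_exp.2 ?_)
    rw [inner_add_left]
    linarith
  have hEq := ae_eq_of_ae_le_of_lintegral_le hFG
    (ne_top_of_le_ne_top ENNReal.ofReal_ne_top ((lintegral_mono_ae hFG).trans hG))
    (ENNReal.continuous_ofReal.comp (by fun_prop)).measurable.aemeasurable (hG.trans hI)
  refine hlt.ne (inner_eq_of_ae_eq μ l _ ?_ v₁ hv₁)
  filter_upwards [hEq] with x hx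
  rw [ENNReal.ofReal_eq_ofReal_iff (Real.exp_pos _).le (Real.exp_pos _).le, Real.exp_eq_exp,
    inner_add_left] at hx
  linarith

end
end
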